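/- Fix τ ∈ H₊, x ∈ ℂ with x ∉ ℤ+τℤ and −x ∉ ℤ+τℤ, and m ∈ ℤ. Let L : (0,1) → ℂ be the (unique) continuous function with exp(L(t)) = E(t,τ) for all t ∈ (0,1) and L(t) − log t → 0 as t → 0⁺. Then for every κ ∈ ℂ with Re(κ) < 0, the function t ↦ exp(−(2/κ)L(t)) · [ σ_x(t,τ)·θ_{4,m}(x + 2t/κ, τ) + σ_{−x}(t,τ)·θ_{4,m}(−x + 2t/κ, τ) ] is integrable on the interval (0,1); i.e. the integral h_m(x,τ,κ) defining the elliptic Selberg-type integral converges absolutely. -/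

import Mathlib

open Complex Filter Topology MeasureTheory

noncomputable section

/-- Jacobi's theta function `ϑ₁(t,τ)`. -/
def theta1 (t τ : ℂ) : ℂ :=
  -∑' j : ℤ, Complex.exp ((Real.pi : ℂ) * Complex.I * ((j : ℂ) + 1/2)^2 * τ +
      2 * (Real.pi : ℂ) * Complex.I * ((j : ℂ) + 1/2) * (t + 1/2))

/-- Derivative of `ϑ₁` in the first argument. -/
def theta1' (t τ : ℂ) : ℂ := deriv (fun s => theta1 s τ) t

/-- Membership in the lattice `ℤ + τℤ`. -/
def inLattice (τ t : ℂ) : Prop := ∃ a b : ℤ, t = (a : ℂ) + (b : ℂ) * τ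

/-- The function `σ_w(t,τ)`. -/
def sigmaF (w t τ : ℂ) : ℂ := theta1 (w - t) τ * theta1' 0 τ / (theta1 w τ * theta1 t τ)

/-- The function `ρ(t,τ) = ϑ₁'(t,τ)/ϑ₁(t,τ)`. -/
def rhoF (t τ : ℂ) : ℂ := theta1' t τ / theta1 t τ

/-- The function `E(t,τ) = ϑ₁(t,τ)/ϑ₁'(0,τ)`. -/
def EF (t τ : ℂ) : ℂ := theta1 t τ / theta1' 0 τ

end

noncomputable section

/-- The theta function `θ_{4,m}(x,τ) = ∑_{j∈ℤ} exp(πi(8j+m)²τ/8 + πi(8j+m)x)`. -/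
def theta4m (m : ℤ) (x τ : ℂ) : ℂ :=
  ∑' j : ℤ, Complex.exp ((Real.pi : ℂ) * Complex.I * ((8 * j + m : ℤ) : ℂ) ^ 2 * τ / 8
    + (Real.pi : ℂ) * Complex.I * ((8 * j + m : ℤ) : ℂ) * x)

end

/-!
Since `σ_w(t) = ϑ₁(w - t) / ϑ₁(w) · E(t)⁻¹`, each summand of the integrand is
`exp ((-2/κ - 1) L(t))` times a function continuous on `[0, 1]`. Near `0` the exponential is
`O(t ^ Re (-2/κ - 1))`, and this exponent exceeds `-1` because `Re κ < 0`. The symmetry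
`ϑ₁(1 - t) = ϑ₁(t)` lifts through the covering map `exp` to `L(1 - t) = L(t)`, so the singularity
at `1` mirrors the one at `0`.
-/

section Branch

theorem eqOn_of_exp_eqOn {X : Type*} [TopologicalSpace X] {s : Set X} {f g : X → ℂ} {a : X}
    (hs : IsPreconnected s) (hf : ContinuousOn f s) (hg : ContinuousOn g s)
    (hexp : s.EqOn (fun t ↦ exp (f t)) (fun t ↦ exp (g t))) (ha : a ∈ s) (hfg : f a = g a) :
    s.EqOn f g :=
  isCoveringMap_exp.eqOn_of_comp_eqOn hs hf hg (fun _ ht ↦ Subtype.ext (hexp ht)) ha hfg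

theorem comp_sub_left_eqOn_of_exp {L : ℝ → ℂ} {c : ℝ} (hL : ContinuousOn L (Set.Ioo 0 c))
    (hexp : ∀ t ∈ Set.Ioo 0 c, exp (L (c - t)) = exp (L t)) :
    (Set.Ioo 0 c).EqOn (fun t ↦ L (c - t)) L := by
  intro t ht
  have hc : 0 < c := ht.1.trans ht.2
  have hmaps : Set.MapsTo (fun t ↦ c - t) (Set.Ioo 0 c) (Set.Ioo 0 c) := fun t ht ↦
    ⟨sub_pos.2 ht.2, sub_lt_self c ht.1⟩
  exact eqOn_of_exp_eqOn isPreconnected_Ioo (hL.comp (by fun_prop) hmaps) hL hexp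
    ⟨half_pos hc, half_lt_self hc⟩ (congrArg L (sub_half c)) ht

theorem exp_mul_isBigO_rpow {L : ℝ → ℂ}
    (hL : (fun t : ℝ ↦ L t - (Real.log t : ℂ)) =O[𝓝[>] 0] (fun _ ↦ (1 : ℝ))) (a : ℂ) :
    (fun t : ℝ ↦ exp (a * L t)) =O[𝓝[>] 0] (fun t : ℝ ↦ t ^ a.re) := by
  obtain ⟨C, hC⟩ := hL.bound
  refine Asymptotics.IsBigO.of_bound (Real.exp (‖a‖ * C)) ?_
  filter_upwards [hC, self_mem_nhdsWithin] with t hbound ht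
  have hsplit : a * L t = a * (L t - (Real.log t : ℂ)) + a * (Real.log t : ℂ) := by ring
  have hre : (a * (L t - (Real.log t : ℂ))).re ≤ ‖a‖ * C :=
    calc (a * (L t - (Real.log t : ℂ))).re
      _ ≤ ‖a * (L t - (Real.log t : ℂ))‖ := re_le_norm _
      _ = ‖a‖ * ‖L t - (Real.log t : ℂ)‖ := norm_mul _ _
      _ ≤ ‖a‖ * C := by gcongr; simpa using hbound
  calc ‖exp (a * L t)‖
    _ = Real.exp (a * (L t - (Real.log t : ℂ))).re * Real.exp (Real.log t * a.re) := by
      rw [norm_exp, hsplit, add_re, re_mul_ofReal, mul_comm a.re, Real.exp_add]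
    _ ≤ Real.exp (‖a‖ * C) * Real.exp (Real.log t * a.re) := by gcongr
    _ = Real.exp (‖a‖ * C) * ‖t ^ a.re‖ := by
      rw [Real.norm_of_nonneg (Real.rpow_nonneg ht.le _), Real.rpow_def_of_pos ht]

end Branch

section Integrability

variable {E : Type*} [NormedAddCommGroup E] {f : ℝ → E}

theorem integrableAtFilter_rpow_nhdsGT_zero {s : ℝ} (hs : -1 < s) :
    IntegrableAtFilter (fun t : ℝ ↦ t ^ s) (𝓝[>] 0) :=
  ⟨Set.Ioo 0 1, Ioo_mem_nhdsGT one_pos,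
    (intervalIntegral.integrableOn_Ioo_rpow_iff one_pos).2 hs⟩

theorem integrableOn_Ioc_of_integrableAtFilter_nhdsGT {a b : ℝ}
    (hf : ContinuousOn f (Set.Ioc a b)) (ha : IntegrableAtFilter f (𝓝[>] a)) :
    IntegrableOn f (Set.Ioc a b) := by
  obtain ⟨s, hs, hfs⟩ := ha
  obtain ⟨u, hau, hus⟩ := mem_nhdsGT_iff_exists_Ioc_subset.1 hs
  have hnear : IntegrableOn f (Set.Ioc a u) := hfs.mono_set hus
  have haway : IntegrableOn f (Set.Icc u b) :=
    (hf.mono fun t ht ↦ ⟨lt_of_lt_of_le hau ht.1, ht.2⟩).integrableOn_Icc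
  exact (hnear.union haway).mono_set fun t ht ↦
    (le_total t u).imp (fun h ↦ ⟨ht.1, h⟩) (fun h ↦ ⟨h, ht.2⟩)

theorem integrableOn_Ioo_of_comp_sub_left_eqOn {c : ℝ} (hf : ContinuousOn f (Set.Ioo 0 c))
    (hsymm : (Set.Ioo 0 c).EqOn (fun t ↦ f (c - t)) f) (h0 : IntegrableAtFilter f (𝓝[>] 0)) :
    IntegrableOn f (Set.Ioo 0 c) := by
  rcases le_or_gt c 0 with hc | hc
  · simp [Set.Ioo_eq_empty hc.not_gt]
  have hleft : IntervalIntegrable f volume 0 (c / 2) := by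
    rw [intervalIntegrable_iff_integrableOn_Ioc_of_le (half_pos hc).le]
    exact integrableOn_Ioc_of_integrableAtFilter_nhdsGT
      (hf.mono fun t ht ↦ ⟨ht.1, ht.2.trans_lt (half_lt_self hc)⟩) h0
  have hright : IntervalIntegrable f volume (c / 2) c := by
    have hreflected : IntervalIntegrable (fun t ↦ f (c - t)) volume (c / 2) c := by
      simpa only [sub_zero, sub_half] using (hleft.comp_sub_left c).symm
    refine hreflected.congr_uIoo fun t ht ↦ hsymm ?_
    rw [Set.uIoo_of_le (half_lt_self hc).le] at ht
    exact ⟨(half_pos hc).trans ht.1, ht.2⟩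
  exact (intervalIntegrable_iff_integrableOn_Ioo_of_le hc.le).1 (hleft.trans hright)

theorem integrableOn_exp_mul_of_symm_of_sub_log_isBigO {L : ℝ → ℂ} {c : ℝ}
    (hL : ContinuousOn L (Set.Ioo 0 c)) (hsymm : (Set.Ioo 0 c).EqOn (fun t ↦ L (c - t)) L)
    (h0 : (fun t : ℝ ↦ L t - (Real.log t : ℂ)) =O[𝓝[>] 0] (fun _ ↦ (1 : ℝ)))
    {a : ℂ} (ha : -1 < a.re) : IntegrableOn (fun t ↦ exp (a * L t)) (Set.Ioo 0 c) := by
  rcases le_or_gt c 0 with hc | hc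
  · simp [Set.Ioo_eq_empty hc.not_gt]
  have hexp : ContinuousOn (fun t ↦ exp (a * L t)) (Set.Ioo 0 c) := (hL.const_mul a).cexp
  have hmeas : StronglyMeasurableAtFilter (fun t ↦ exp (a * L t)) (𝓝[>] 0) :=
    ⟨Set.Ioo 0 c, Ioo_mem_nhdsGT hc, hexp.aestronglyMeasurable measurableSet_Ioo⟩
  exact integrableOn_Ioo_of_comp_sub_left_eqOn hexp
    (fun t ht ↦ congrArg (fun z ↦ exp (a * z)) (hsymm ht))
    ((exp_mul_isBigO_rpow h0 a).integrableAtFilter hmeas (integrableAtFilter_rpow_nhdsGT_zero ha))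

end Integrability

section Theta

variable {τ : ℂ}

theorem theta1_eq_jacobiTheta₂ (t τ : ℂ) : theta1 t τ =
    -(exp (Real.pi * I * τ / 4 + Real.pi * I * (t + 1 / 2)) *
      jacobiTheta₂ (t + 1 / 2 + τ / 2) τ) := by
  simp only [theta1, jacobiTheta₂, jacobiTheta₂_term, ← tsum_mul_left, ← exp_add]
  congr! 3
  ring_nf

theorem theta4m_eq_jacobiTheta₂ (m : ℤ) (x τ : ℂ) : theta4m m x τ =
    exp (Real.pi * I * m ^ 2 * τ / 8 + Real.pi * I * m * x) *
      jacobiTheta₂ (4 * x + m * τ) (8 * τ) := by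
  simp only [theta4m, jacobiTheta₂, jacobiTheta₂_term, ← tsum_mul_left, ← exp_add]
  congr! 3
  push_cast
  ring

theorem continuous_jacobiTheta₂_fst (hτ : 0 < τ.im) : Continuous fun z ↦ jacobiTheta₂ z τ :=
  continuous_iff_continuousAt.2 fun z ↦ (differentiableAt_jacobiTheta₂_fst z hτ).continuousAt

theorem continuous_theta1 (hτ : 0 < τ.im) : Continuous fun t ↦ theta1 t τ := by
  have hθ : Continuous fun t ↦ jacobiTheta₂ (t + 1 / 2 + τ / 2) τ :=
    (continuous_jacobiTheta₂_fst hτ).comp (by fun_prop)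
  simp_rw [theta1_eq_jacobiTheta₂]
  fun_prop

theorem continuous_theta4m (m : ℤ) (hτ : 0 < τ.im) : Continuous fun x ↦ theta4m m x τ := by
  have hθ : Continuous fun x ↦ jacobiTheta₂ (4 * x + m * τ) (8 * τ) :=
    (continuous_jacobiTheta₂_fst (by simpa using hτ)).comp (by fun_prop)
  simp_rw [theta4m_eq_jacobiTheta₂]
  fun_prop

theorem theta1_one_sub (t τ : ℂ) : theta1 (1 - t) τ = theta1 t τ := by
  unfold theta1
  -- The reindexing `j ↦ -1 - j` negates `j + 1/2`.
  rw [← (Equiv.subLeft (-1 : ℤ)).tsum_eq]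
  congr 1
  refine tsum_congr fun j ↦ exp_eq_exp_iff_exists_int.2 ⟨-(2 * j + 1), ?_⟩
  simp only [Equiv.subLeft_apply]
  push_cast
  ring

theorem EF_one_sub (t τ : ℂ) : EF (1 - t) τ = EF t τ := by
  rw [EF, EF, theta1_one_sub]

theorem sigmaF_eq_mul_inv_EF (w t τ : ℂ) :
    sigmaF w t τ = theta1 (w - t) τ / theta1 w τ * (EF t τ)⁻¹ := by
  rw [sigmaF, EF, inv_div, div_mul_div_comm]

theorem log_EF_one_sub_eqOn {L : ℝ → ℂ} (hLc : ContinuousOn L (Set.Ioo 0 1))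
    (hLe : ∀ t ∈ Set.Ioo (0 : ℝ) 1, exp (L t) = EF t τ) :
    (Set.Ioo 0 1).EqOn (fun t ↦ L (1 - t)) L := by
  refine comp_sub_left_eqOn_of_exp hLc fun t ht ↦ ?_
  rw [hLe t ht, hLe (1 - t) ⟨sub_pos.2 ht.2, sub_lt_self 1 ht.1⟩]
  exact_mod_cast EF_one_sub t τ

theorem integrableOn_exp_mul_log_EF_mul_sigmaF_mul (hτ : 0 < τ.im) {L : ℝ → ℂ}
    (hLc : ContinuousOn L (Set.Ioo 0 1))
    (hLe : ∀ t ∈ Set.Ioo (0 : ℝ) 1, exp (L t) = EF t τ)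
    (hL0 : (fun t : ℝ ↦ L t - (Real.log t : ℂ)) =O[𝓝[>] 0] (fun _ ↦ (1 : ℝ)))
    {a : ℂ} (ha : 0 < a.re) (w : ℂ) {g : ℝ → ℂ} (hg : ContinuousOn g (Set.Icc 0 1)) :
    IntegrableOn (fun t : ℝ ↦ exp (a * L t) * (sigmaF w t τ * g t)) (Set.Ioo 0 1) := by
  have hexp : IntegrableOn (fun t ↦ exp ((a - 1) * L t)) (Set.Ioo 0 1) :=
    integrableOn_exp_mul_of_symm_of_sub_log_isBigO hLc (log_EF_one_sub_eqOn hLc hLe) hL0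
      (by simpa using ha)
  have hθ : Continuous fun t : ℝ ↦ theta1 (w - t) τ :=
    (continuous_theta1 hτ).comp (by fun_prop)
  have hcont : ContinuousOn (fun t : ℝ ↦ theta1 (w - t) τ / theta1 w τ * g t) (Set.Icc 0 1) :=
    (hθ.div_const _).continuousOn.mul hg
  refine (hexp.mul_continuousOn_of_subset hcont measurableSet_Ioo isCompact_Icc
    Set.Ioo_subset_Icc_self).congr_fun (fun t ht ↦ ?_) measurableSet_Ioo
  have hshift : exp ((a - 1) * L t) = exp (a * L t) * (EF t τ)⁻¹ := by
    rw [← hLe t ht, ← exp_neg, ← exp_add]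
    ring_nf
  simp only [hshift, sigmaF_eq_mul_inv_EF]
  ring

end Theta

theorem re_neg_two_div_pos {κ : ℂ} (hκ : κ.re < 0) : 0 < (-(2 / κ)).re := by
  have hκ0 : κ ≠ 0 := by rintro rfl; simp at hκ
  have hre : (-(2 / κ)).re = -(2 * κ.re / normSq κ) := by simp [div_re]
  rw [hre, neg_pos]
  exact div_neg_of_neg_of_pos (by linarith) (normSq_pos.2 hκ0)

/-- convergence of the elliptic Selberg-type integral: for `Re κ < 0`,
the integrand `E(t,τ)^{−2/κ}[σ_x(t)θ_{4,m}(x+2t/κ) + σ_{−x}(t)θ_{4,m}(−x+2t/κ)]` is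
(absolutely) integrable on `(0,1)`, where the branch `L` of `log E(·,τ)` satisfies
`L(t) − log t → 0` as `t → 0⁺`. -/
theorem selberg_integrand_integrable (τ : ℂ) (hτ : 0 < τ.im)
    (x : ℂ) (hx : ¬ inLattice τ x) (hx' : ¬ inLattice τ (-x)) (m : ℤ)
    (L : ℝ → ℂ) (hLc : ContinuousOn L (Set.Ioo 0 1))
    (hLe : ∀ t ∈ Set.Ioo (0 : ℝ) 1, Complex.exp (L t) = EF (t : ℂ) τ)
    (hL0 : Tendsto (fun t : ℝ => L t - (Real.log t : ℂ)) (𝓝[>] (0 : ℝ)) (𝓝 0))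
    (κ : ℂ) (hκ : κ.re < 0) :
    IntegrableOn (fun t : ℝ =>
      Complex.exp (-(2 / κ) * L t) *
        (sigmaF x (t : ℂ) τ * theta4m m (x + 2 * (t : ℂ) / κ) τ +
          sigmaF (-x) (t : ℂ) τ * theta4m m (-x + 2 * (t : ℂ) / κ) τ))
      (Set.Ioo 0 1) := by
  have hθ (w : ℂ) : ContinuousOn (fun t : ℝ ↦ theta4m m (w + 2 * (t : ℂ) / κ) τ) (Set.Icc 0 1) :=
    ((continuous_theta4m m hτ).comp (by fun_prop)).continuousOn
  have hterm (w : ℂ) : IntegrableOn (fun t : ℝ ↦ exp (-(2 / κ) * L t) *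
      (sigmaF w t τ * theta4m m (w + 2 * (t : ℂ) / κ) τ)) (Set.Ioo 0 1) :=
    integrableOn_exp_mul_log_EF_mul_sigmaF_mul hτ hLc hLe (hL0.isBigO_one ℝ)
      (re_neg_two_div_pos hκ) w (hθ w)
  simp only [mul_add]
  exact (hterm x).add (hterm (-x))
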